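/- For n ≥ 1, the element -1 of Cl_{n+1} belongs to M_n (indeed (e_i e_{i+1})² = -1 for each i), it generates a central subgroup {1, -1} of order 2, and the quotient group M_n / {±1} is isomorphic to (ℤ/2ℤ)^n. -/

import Mathlib

/-!
`Cl_m` is the Clifford algebra of `Q_m(x) = -(x,x)` on `ℝ^m`, with generators
`e_1, …, e_m`.  `M_n` is the subgroup of the unit group of `Cl_{n+1}` generated by
the elements `e_i e_{i+1}` for `1 ≤ i ≤ n`.

Theorem: for `n ≥ 1`, the element `-1` of `Cl_{n+1}` belongs to `M_n`
(indeed `(e_i e_{i+1})² = -1` for each `i`), it generates a central subgroup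
`{1, -1}` of order `2`, and `M_n / {±1} ≅ (ℤ/2ℤ)^n` (expressed via a surjective
homomorphism onto `(ℤ/2ℤ)^n` with kernel the subgroup generated by `-1`).
-/

noncomputable section

/-- The quadratic form `Q_m(x) = -(x, x)` on `ℝ^m`. -/
def Qneg (m : ℕ) : QuadraticForm ℝ (Fin m → ℝ) :=
  QuadraticMap.weightedSumSquares ℝ (fun _ : Fin m => (-1 : ℝ))

/-- The real Clifford algebra `Cl_m` of `Q_m`. -/
abbrev Cl (m : ℕ) := CliffordAlgebra (Qneg m)

/-- The generator `e_i ∈ Cl_m`, the image of the `i`-th standard basis vector. -/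
def eCl (m : ℕ) (i : Fin m) : Cl m := CliffordAlgebra.ι (Qneg m) (Pi.single i 1)

/-- `M_n`: the subgroup of the unit group of `Cl_{n+1}` generated by the elements
`e_i e_{i+1}`, `1 ≤ i ≤ n`. -/
def Mgrp (n : ℕ) : Subgroup (Cl (n + 1))ˣ :=
  Subgroup.closure {u : (Cl (n + 1))ˣ | ∃ i : Fin n,
    (u : Cl (n + 1)) = eCl (n + 1) i.castSucc * eCl (n + 1) i.succ}

/-- A commutative group generated by involutions `g i` is detected by any homomorphism sending
the `g i` to the standard basis of `(ℤ/2ℤ)^ι`. -/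
theorem bijective_of_map_eq_mulSingle {ι Q : Type*} [Fintype ι] [DecidableEq ι] [CommGroup Q]
    (g : ι → Q) (hg : Subgroup.closure (Set.range g) = ⊤) (hsq : ∀ i, g i ^ 2 = 1)
    (φ : Q →* (ι → Multiplicative (ZMod 2)))
    (hφ : ∀ i, φ (g i) = Pi.mulSingle i (Multiplicative.ofAdd 1)) : Function.Bijective φ := by
  have hprod : ∀ a : ι → ℤ, φ (∏ i, g i ^ a i) =
      fun i => Multiplicative.ofAdd ((a i : ℤ) : ZMod 2) := by
    intro a
    funext j
    rw [map_prod, Finset.prod_apply, Finset.prod_eq_single j]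
    · rw [map_zpow, hφ, Pi.pow_apply, Pi.mulSingle_eq_same, ← ofAdd_zsmul, zsmul_one]
    · intro i _ hij
      rw [map_zpow, hφ, Pi.pow_apply, Pi.mulSingle_eq_of_ne hij.symm, one_zpow]
    · simp
  constructor
  · rw [injective_iff_map_eq_one]
    intro x hx
    obtain ⟨a, rfl⟩ := Subgroup.mem_closure_range_iff_of_fintype.1
      (show x ∈ Subgroup.closure (Set.range g) by simp [hg])
    rw [hprod] at hx
    refine Finset.prod_eq_one fun i _ => ?_
    have hi : ((a i : ℤ) : ZMod 2) = 0 := congrArg Multiplicative.toAdd (congrFun hx i)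
    obtain ⟨b, hb⟩ := (ZMod.intCast_zmod_eq_zero_iff_dvd (a i) 2).1 hi
    rw [hb, zpow_mul]
    have h2 : g i ^ ((2 : ℕ) : ℤ) = 1 := by rw [zpow_natCast, hsq]
    rw [h2, one_zpow]
  · intro v
    refine ⟨∏ i, g i ^ (((v i).toAdd.val : ℕ) : ℤ), ?_⟩
    rw [hprod]
    funext i
    simp

/-- A group generated by elements `g i` that commute and square to `1` modulo a central cyclic
subgroup `⟨u⟩` is an extension of `(ℤ/2ℤ)^ι` by `⟨u⟩` as soon as some homomorphism killing `u`
sends the `g i` to the standard basis. -/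
theorem surjective_and_ker_eq_zpowers {ι G : Type*} [Fintype ι] [DecidableEq ι] [Group G]
    {u : G} (hu : u ∈ Subgroup.center G)
    (g : ι → G) (hg : Subgroup.closure (Set.range g) = ⊤)
    (hsq : ∀ i, g i ^ 2 ∈ Subgroup.zpowers u)
    (hcomm : ∀ i j, (g j * g i)⁻¹ * (g i * g j) ∈ Subgroup.zpowers u)
    (φ : G →* (ι → Multiplicative (ZMod 2))) (hφu : φ u = 1)
    (hφ : ∀ i, φ (g i) = Pi.mulSingle i (Multiplicative.ofAdd 1)) :
    Function.Surjective φ ∧ φ.ker = Subgroup.zpowers u := by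
  set N := Subgroup.zpowers u with hN
  have hNc : N ≤ Subgroup.center G := by rwa [hN, Subgroup.zpowers_le]
  have : N.Normal := ⟨fun x hx y => by
    rwa [Subgroup.mem_center_iff.1 (hNc hx) y, mul_inv_cancel_right]⟩
  have hle : N ≤ φ.ker := by rwa [hN, Subgroup.zpowers_le, MonoidHom.mem_ker]
  have hgen : Subgroup.closure (Set.range fun i => (g i : G ⧸ N)) = ⊤ := by
    have h := congrArg (Subgroup.map (QuotientGroup.mk' N)) hg
    rw [MonoidHom.map_closure, ← Set.range_comp,
      Subgroup.map_top_of_surjective _ (QuotientGroup.mk'_surjective N)] at h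
    exact h
  have hmul : ∀ x y : G ⧸ N, x * y = y * x := by
    intro x y
    have hx : x ∈ Subgroup.closure (Set.range fun i => (g i : G ⧸ N)) := by simp [hgen]
    have hy : y ∈ Subgroup.closure (Set.range fun i => (g i : G ⧸ N)) := by simp [hgen]
    refine Subgroup.closure_induction₂ (p := fun x y _ _ => Commute x y) ?_ ?_ ?_ ?_ ?_ ?_ ?_ hx hy
    · rintro _ _ ⟨i, rfl⟩ ⟨j, rfl⟩
      exact ((QuotientGroup.eq (s := N)).2 (hcomm i j)).symm
    · exact fun x _ => Commute.one_left x
    · exact fun x _ => Commute.one_right x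
    · exact fun x y z _ _ _ h₁ h₂ => h₁.mul_left h₂
    · exact fun x y z _ _ _ h₁ h₂ => h₁.mul_right h₂
    · exact fun x y _ _ h => h.inv_left
    · exact fun x y _ _ h => h.inv_right
  let _ : CommGroup (G ⧸ N) := { (inferInstance : Group (G ⧸ N)) with mul_comm := hmul }
  have hbij := bijective_of_map_eq_mulSingle (fun i => (g i : G ⧸ N)) hgen
    (fun i => (QuotientGroup.eq_one_iff (N := N) (g i ^ 2)).2 (hsq i))
    (QuotientGroup.lift N φ hle) (fun i => hφ i)
  refine ⟨fun v => ?_, le_antisymm (fun x hx => ?_) hle⟩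
  · obtain ⟨x, hx⟩ := hbij.2 v
    obtain ⟨y, rfl⟩ := QuotientGroup.mk_surjective x
    exact ⟨y, hx⟩
  · refine (QuotientGroup.eq_one_iff x).1 (hbij.1 ?_)
    rw [map_one]
    exact hx

section AntiCommuting

variable {G : Type*} [Group G] [HasDistribNeg G]

theorem neg_ne_self_of_neg_one_ne_one (h1 : (-1 : G) ≠ 1) (x : G) : -x ≠ x := fun hx =>
  h1 (mul_right_cancel (b := x) (by rw [neg_mul, one_mul, hx]))

/-- If every element of `H` commutes or anticommutes with `w`, recording which of the two happens
is a homomorphism to `ℤ/2ℤ`. -/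
def antiCommuteHom (h1 : (-1 : G) ≠ 1) (H : Subgroup G) (w : G)
    (hw : ∀ x ∈ H, x * w = w * x ∨ x * w = -(w * x)) : H →* Multiplicative (ZMod 2) :=
  open Classical in
  MonoidHom.mk' (fun x => Multiplicative.ofAdd (if (x : G) * w = w * x then 0 else 1)) <| by
    rintro ⟨x, hx⟩ ⟨y, hy⟩
    have hne := neg_ne_self_of_neg_one_ne_one h1
    rw [← ofAdd_add]
    congr 1
    have key : x * y * w = x * (y * w) := mul_assoc _ _ _
    rcases hw x hx with h | h <;> rcases hw y hy with h' | h' <;>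
      simp only [Subgroup.coe_mul, key, h', mul_neg, ← mul_assoc, h, neg_mul, neg_neg, hne,
        if_true, if_false]
    all_goals decide

theorem antiCommuteHom_eq_one (h1 : (-1 : G) ≠ 1) {H : Subgroup G} {w : G}
    (hw : ∀ x ∈ H, x * w = w * x ∨ x * w = -(w * x)) {x : H} (hx : (x : G) * w = w * x) :
    antiCommuteHom h1 H w hw x = 1 := by
  simp [antiCommuteHom, hx]

theorem antiCommuteHom_eq_ofAdd_one (h1 : (-1 : G) ≠ 1) {H : Subgroup G} {w : G}
    (hw : ∀ x ∈ H, x * w = w * x ∨ x * w = -(w * x)) {x : H} (hx : (x : G) * w = -(w * x)) :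
    antiCommuteHom h1 H w hw x = Multiplicative.ofAdd 1 := by
  simp [antiCommuteHom, hx, neg_ne_self_of_neg_one_ne_one h1]

theorem commute_or_antiCommute_of_mem_closure {s : Set G} {w : G}
    (hs : ∀ x ∈ s, x * w = w * x ∨ x * w = -(w * x)) {x : G} (hx : x ∈ Subgroup.closure s) :
    x * w = w * x ∨ x * w = -(w * x) := by
  induction hx using Subgroup.closure_induction with
  | mem x hx => exact hs x hx
  | one => simp
  | mul x y _ _ hx hy =>
    have key : x * y * w = x * (y * w) := mul_assoc _ _ _
    rcases hx with h | h <;> rcases hy with h' | h' <;>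
      simp [key, h', ← mul_assoc, h]
  | inv x _ hx =>
    refine hx.imp (fun h => ?_) (fun h => ?_)
    · rw [inv_mul_eq_iff_eq_mul, ← mul_assoc, h, mul_inv_cancel_right]
    · rw [inv_mul_eq_iff_eq_mul, mul_neg, ← mul_assoc, h, neg_mul, neg_neg, mul_inv_cancel_right]

variable {n : ℕ} {E : Fin (n + 1) → G}

theorem adjacent_mul_sq (hsq : ∀ i, E i * E i = -1)
    (hanti : ∀ i j, i ≠ j → E i * E j = -(E j * E i)) (k : Fin n) :
    (E k.castSucc * E k.succ) ^ 2 = -1 := by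
  rw [sq, mul_assoc, ← mul_assoc (E k.succ), hanti _ _ (Fin.castSucc_lt_succ (i := k)).ne',
    neg_mul, mul_assoc, hsq, mul_neg_one, neg_neg, hsq]

theorem adjacent_mul_generator (hanti : ∀ i j, i ≠ j → E i * E j = -(E j * E i)) (k : Fin n)
    (j : Fin (n + 1)) :
    E k.castSucc * E k.succ * E j =
      if (j : ℕ) = k ∨ (j : ℕ) = k + 1 then -(E j * (E k.castSucc * E k.succ))
      else E j * (E k.castSucc * E k.succ) := by
  have hlt := Fin.castSucc_lt_succ (i := k)
  split_ifs with h
  · obtain h | h := h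
    · obtain rfl : j = k.castSucc := Fin.ext h
      rw [mul_assoc, hanti _ _ hlt.ne', mul_neg]
    · obtain rfl : j = k.succ := Fin.ext h
      rw [← mul_assoc, hanti _ _ hlt.ne', neg_mul, neg_neg]
  · have h₁ : k.castSucc ≠ j := fun e => h (Or.inl (e ▸ rfl))
    have h₂ : k.succ ≠ j := fun e => h (Or.inr (e ▸ rfl))
    rw [mul_assoc, hanti _ _ h₂, mul_neg, ← mul_assoc, hanti _ _ h₁, neg_mul, neg_neg, mul_assoc]

/-- The products `E k * E (k + 1)` anticommute with exactly one partial product `E 0 ⋯ E (j - 1)`,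
the one with `j = k + 1`. -/
theorem adjacent_mul_partialProd (hanti : ∀ i j, i ≠ j → E i * E j = -(E j * E i)) (k : Fin n)
    (j : Fin (n + 2)) :
    E k.castSucc * E k.succ * Fin.partialProd E j =
      if (j : ℕ) = k + 1 then -(Fin.partialProd E j * (E k.castSucc * E k.succ))
      else Fin.partialProd E j * (E k.castSucc * E k.succ) := by
  induction j using Fin.induction with
  | zero => simp
  | succ j ih =>
    rw [Fin.partialProd_succ, ← mul_assoc, ih, Fin.val_castSucc, Fin.val_succ]
    have hj := adjacent_mul_generator hanti k j
    split_ifs at hj ⊢ <;> first | omega | simp only [neg_mul, mul_assoc] at hj ⊢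
    all_goals simp [hj]

theorem adjacent_mul_comm_or_anti (hanti : ∀ i j, i ≠ j → E i * E j = -(E j * E i))
    (k l : Fin n) :
    E k.castSucc * E k.succ * (E l.castSucc * E l.succ) =
        E l.castSucc * E l.succ * (E k.castSucc * E k.succ) ∨
      E k.castSucc * E k.succ * (E l.castSucc * E l.succ) =
        -(E l.castSucc * E l.succ * (E k.castSucc * E k.succ)) := by
  have h₁ := adjacent_mul_generator hanti k l.castSucc
  have h₂ := adjacent_mul_generator hanti k l.succ
  rw [← mul_assoc]
  split_ifs at h₁ h₂ <;> rw [h₁] <;>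
    simp only [neg_mul, mul_assoc (E l.castSucc), h₂, mul_neg, neg_neg, true_or, or_true]

/-- The subgroup generated by products of adjacent members of an anticommuting family of square
roots of `-1` is an extension of `(ℤ/2ℤ)^n` by `{±1}`. -/
theorem exists_hom_closure_adjacent_mul (h1 : (-1 : G) ≠ 1) (hsq : ∀ i, E i * E i = -1)
    (hanti : ∀ i j, i ≠ j → E i * E j = -(E j * E i)) {g : Fin n → G}
    (hg : ∀ k, g k = E k.castSucc * E k.succ) {M : Subgroup G}
    (hM : M = Subgroup.closure (Set.range g))
    {u : M} (hu : (u : G) = -1) (huc : u ∈ Subgroup.center M) :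
    ∃ φ : M →* (Fin n → Multiplicative (ZMod 2)),
      Function.Surjective φ ∧ φ.ker = Subgroup.zpowers u := by
  subst hM
  have hmem : ∀ k, g k ∈ Subgroup.closure (Set.range g) := fun k =>
    Subgroup.subset_closure ⟨k, rfl⟩
  let w : Fin n → G := fun i => Fin.partialProd E i.succ.castSucc
  have hw : ∀ k i, g k * w i = if i = k then -(w i * g k) else w i * g k := by
    intro k i
    have h := adjacent_mul_partialProd hanti k i.succ.castSucc
    simpa only [← hg, Fin.val_castSucc, Fin.val_succ, add_left_inj, ← Fin.ext_iff] using h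
  have hwmem : ∀ i, ∀ x ∈ Subgroup.closure (Set.range g),
      x * w i = w i * x ∨ x * w i = -(w i * x) := by
    refine fun i x hx => commute_or_antiCommute_of_mem_closure ?_ hx
    rintro _ ⟨k, rfl⟩
    rw [hw]
    split_ifs <;> simp
  let φ := MonoidHom.pi fun i => antiCommuteHom h1 _ (w i) (hwmem i)
  refine ⟨φ, surjective_and_ker_eq_zpowers huc (fun k => ⟨g k, hmem k⟩) ?_ ?_ ?_ φ ?_ ?_⟩
  · rw [← Subgroup.closure_closure_coe_preimage (k := Set.range g)]
    congr 1
    ext x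
    simp [Subtype.ext_iff, eq_comm]
  · intro k
    convert Subgroup.mem_zpowers u
    refine Subtype.ext (Eq.trans ?_ hu.symm)
    exact (congrArg (· ^ 2) (hg k)).trans (adjacent_mul_sq hsq hanti k)
  · intro k l
    have h := adjacent_mul_comm_or_anti hanti k l
    rw [← hg, ← hg] at h
    rcases h with h | h
    · convert Subgroup.one_mem _
      exact Subtype.ext (inv_mul_eq_one.2 h.symm)
    · convert Subgroup.mem_zpowers u
      refine Subtype.ext (Eq.trans (inv_mul_eq_iff_eq_mul.2 ?_) hu.symm)
      rw [mul_neg_one]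
      exact h
  · funext i
    exact antiCommuteHom_eq_one h1 (hwmem i) (by simp [hu])
  · intro k
    funext i
    have h := hw k i
    by_cases hik : i = k
    · subst hik
      rw [if_pos rfl] at h
      rw [Pi.mulSingle_eq_same]
      exact antiCommuteHom_eq_ofAdd_one h1 (hwmem i) h
    · rw [if_neg hik] at h
      rw [Pi.mulSingle_eq_of_ne hik]
      exact antiCommuteHom_eq_one h1 (hwmem i) h

end AntiCommuting

theorem eCl_mul_self (m : ℕ) (i : Fin m) : eCl m i * eCl m i = -1 := by
  have h : Qneg m (Pi.single i 1) = -1 := by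
    simp [Qneg, QuadraticMap.weightedSumSquares_apply, Pi.single_apply]
  rw [eCl, CliffordAlgebra.ι_sq_scalar, h, map_neg, map_one]

theorem eCl_mul_eCl_of_ne (m : ℕ) {i j : Fin m} (hij : i ≠ j) :
    eCl m i * eCl m j = -(eCl m j * eCl m i) := by
  refine CliffordAlgebra.ι_mul_ι_comm_of_isOrtho ?_
  rw [QuadraticMap.isOrtho_def]
  simp only [Qneg, QuadraticMap.weightedSumSquares_apply, ← Finset.sum_add_distrib]
  refine Finset.sum_congr rfl fun k _ => ?_
  by_cases hi : k = i
  · subst hi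
    simp [hij]
  · simp [hi]

/-- The generator `e_i` as a unit of `Cl_m`. -/
def eClUnit (m : ℕ) (i : Fin m) : (Cl m)ˣ where
  val := eCl m i
  inv := -eCl m i
  val_inv := by rw [mul_neg, eCl_mul_self, neg_neg]
  inv_val := by rw [neg_mul, eCl_mul_self, neg_neg]

theorem Mgrp_eq_closure_range (n : ℕ) :
    Mgrp n = Subgroup.closure
      (Set.range fun k : Fin n => eClUnit (n + 1) k.castSucc * eClUnit (n + 1) k.succ) := by
  rw [Mgrp]
  congr 1
  ext u
  simp [Units.ext_iff, eClUnit, eq_comm]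

theorem neg_one_ne_one_units_Cl (m : ℕ) : (-1 : (Cl m)ˣ) ≠ 1 := by
  intro h
  have h' : (-1 : Cl m) = 1 := congrArg Units.val h
  have : Invertible (2 : ℝ) := invertibleOfNonzero two_ne_zero
  have h2 : algebraMap ℝ (Cl m) (-1) = algebraMap ℝ (Cl m) 1 := by rw [map_neg, map_one, h']
  have h3 := (algebraMap ℝ (Cl m)).injective h2
  norm_num at h3

theorem negOne_mem_and_quotient_iso (n : ℕ) (hn : 1 ≤ n) :
    (-1 : (Cl (n + 1))ˣ) ∈ Mgrp n ∧
    (∀ i : Fin n, (eCl (n + 1) i.castSucc * eCl (n + 1) i.succ) ^ 2 = -1) ∧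
    ∃ u : ↥(Mgrp n), ((u : (Cl (n + 1))ˣ) : Cl (n + 1)) = -1 ∧
      u ∈ Subgroup.center ↥(Mgrp n) ∧
      Nat.card ↥(Subgroup.zpowers u) = 2 ∧
      ∃ φ : ↥(Mgrp n) →* (Fin n → Multiplicative (ZMod 2)),
        Function.Surjective φ ∧ φ.ker = Subgroup.zpowers u := by
  have hsq : ∀ i, eClUnit (n + 1) i * eClUnit (n + 1) i = -1 := fun i =>
    Units.ext (eCl_mul_self (n + 1) i)
  have hanti : ∀ i j, i ≠ j →
      eClUnit (n + 1) i * eClUnit (n + 1) j = -(eClUnit (n + 1) j * eClUnit (n + 1) i) :=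
    fun i j hij => Units.ext (eCl_mul_eCl_of_ne (n + 1) hij)
  have h1 := neg_one_ne_one_units_Cl (n + 1)
  have hmem : (-1 : (Cl (n + 1))ˣ) ∈ Mgrp n := by
    rw [← adjacent_mul_sq hsq hanti (⟨0, hn⟩ : Fin n), Mgrp_eq_closure_range]
    refine Subgroup.pow_mem _ (Subgroup.subset_closure ?_) 2
    exact Set.mem_range_self (⟨0, hn⟩ : Fin n)
  have hcenter : (⟨-1, hmem⟩ : Mgrp n) ∈ Subgroup.center (Mgrp n) :=
    Subgroup.mem_center_iff.2 fun x => Subtype.ext (by simp)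
  refine ⟨hmem, fun i => congrArg Units.val (adjacent_mul_sq hsq hanti i), ⟨-1, hmem⟩, rfl,
    hcenter, ?_, exists_hom_closure_adjacent_mul h1 hsq hanti (fun _ => rfl)
      (Mgrp_eq_closure_range n) rfl hcenter⟩
  rw [Nat.card_zpowers, Subgroup.orderOf_mk]
  exact orderOf_eq_prime (by simp) h1
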